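/- Let (H, f) be an LP-type problem of combinatorial dimension at most d (d ≥ 1), let I be a finite index set with |I| = m, π : I → H, and set r = 6d² with r < m. For each r-element subset R ⊆ I let V_R = { i ∈ I : f(π(R)) < f(π(R) ∪ {π(i)}) }. Then the number of r-element subsets R of I with |V_R| > m/(3d) is at most C(m, r)/2; equivalently, for a uniformly random r-element subset R, the probability that |V_R| > m/(3d) is at most 1/2. -/

import Mathlib

open Finset

/-!
Pulling `f` back along `π` gives a monotone function on sets of indices whose combinatorial
dimension is still at most `d`, so multiplicities need no special treatment. Pairs `(R, i)` with
`#R = r` and `i` violating `R` correspond to pairs `(S, i)` with `#S = r + 1` and `i` extreme in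
`S`, via `S = insert i R`. Every extreme element of `S` lies in every basis of `S`, so `S` has at
most `d` of them. Hence a random `R` has at most `d (m - r) / (r + 1)` violators on average, and
Markov's inequality finishes the proof.
-/

namespace LPType

variable {α ι T : Type*} [Preorder T]

/-- A basis of an LP-type problem: a finite set of constraints all of whose proper subsets have a
strictly smaller value. -/
def IsBasis (f : Finset α → T) (B : Finset α) : Prop :=
  ∀ B' : Finset α, B' ⊂ B → f B' < f B

/-- The combinatorial dimension of `f` is at most `d`. Stated as a bound on all bases, so that it
makes sense when `α` is infinite. -/
def CombDimLE (f : Finset α → T) (d : ℕ) : Prop :=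
  ∀ B : Finset α, IsBasis f B → #B ≤ d

/-- The violators of `R`: the constraints whose addition to `R` increases the value. -/
def violators [Fintype ι] [DecidableEq ι] [DecidableLT T] (g : Finset ι → T) (R : Finset ι) :
    Finset ι :=
  {i | g R < g (insert i R)}

/-- The extreme elements of `S`: those whose removal from `S` decreases the value. -/
def extremes [DecidableEq ι] [DecidableLT T] (g : Finset ι → T) (S : Finset ι) : Finset ι :=
  {i ∈ S | g (S.erase i) < g S}

theorem exists_isBasis_subset {f : Finset α → T} (hf : Monotone f) (G : Finset α) :
    ∃ B ⊆ G, IsBasis f B ∧ f G ≤ f B := by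
  obtain ⟨B, hBG, hB⟩ := exists_minimal_le_of_wellFoundedLT (fun B ↦ f G ≤ f B) G le_rfl
  exact ⟨B, hBG, fun B' hB' ↦ lt_of_le_not_ge (hf hB'.subset) fun hle ↦
    hB.not_prop_of_lt hB' (hB.prop.trans hle), hB.prop⟩

section Pullback

variable [DecidableEq α] {f : Finset α → T} {π : ι → α} {B : Finset ι}

theorem IsBasis.injOn (hB : IsBasis (fun S ↦ f (S.image π)) B) : Set.InjOn π B := by
  classical
  intro i hi j hj hij
  by_contra hne
  have himage : (B.erase i).image π = B.image π := by
    refine (image_subset_image (erase_subset i B)).antisymm fun a ha ↦ ?_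
    obtain ⟨k, hk, rfl⟩ := mem_image.mp ha
    obtain rfl | hki := eq_or_ne k i
    · exact hij ▸ mem_image_of_mem π (mem_erase.mpr ⟨Ne.symm hne, hj⟩)
    · exact mem_image_of_mem π (mem_erase.mpr ⟨hki, hk⟩)
  exact (hB _ (erase_ssubset hi)).ne (congrArg f himage)

theorem IsBasis.image (hB : IsBasis (fun S ↦ f (S.image π)) B) : IsBasis f (B.image π) := by
  intro A hA
  obtain ⟨B', hB'B, rfl⟩ := subset_image_iff.mp hA.subset
  exact hB B' (hB'B.ssubset_of_ne fun h ↦ hA.ne (h ▸ rfl))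

theorem CombDimLE.comp_image {d : ℕ} (hdim : CombDimLE f d) (π : ι → α) :
    CombDimLE (fun S ↦ f (S.image π)) d := fun _ hB ↦
  card_image_of_injOn hB.injOn ▸ hdim _ hB.image

end Pullback

variable [DecidableEq ι] [DecidableLT T] {g : Finset ι → T}

theorem extremes_subset_of_le (hg : Monotone g) {B S : Finset ι} (hBS : B ⊆ S)
    (hle : g S ≤ g B) : extremes g S ⊆ B := by
  intro i hi
  by_contra hiB
  exact (mem_filter.mp hi).2.not_ge (hle.trans (hg (subset_erase.mpr ⟨hBS, hiB⟩)))

theorem card_extremes_le (hg : Monotone g) {d : ℕ} (hdim : CombDimLE g d) (S : Finset ι) :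
    #(extremes g S) ≤ d := by
  obtain ⟨B, hBS, hB, hle⟩ := exists_isBasis_subset hg S
  exact (card_le_card (extremes_subset_of_le hg hBS hle)).trans (hdim B hB)

variable [Fintype ι]

theorem notMem_of_mem_violators {R : Finset ι} {i : ι} (hi : i ∈ violators g R) : i ∉ R :=
  fun hiR ↦ (insert_eq_of_mem hiR ▸ (mem_filter.mp hi).2).false

theorem mem_extremes_insert {R : Finset ι} {i : ι} (hi : i ∉ R) :
    i ∈ extremes g (insert i R) ↔ i ∈ violators g R := by
  simp [extremes, violators, hi]

theorem sum_card_violators_eq_sum_card_extremes (g : Finset ι → T) (r : ℕ) :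
    ∑ R ∈ powersetCard r univ, #(violators g R) =
      ∑ S ∈ powersetCard (r + 1) univ, #(extremes g S) := by
  rw [← card_sigma, ← card_sigma]
  refine card_nbij' (fun p ↦ ⟨insert p.2 p.1, p.2⟩) (fun p ↦ ⟨p.1.erase p.2, p.2⟩) ?_ ?_ ?_ ?_
  · rintro ⟨R, i⟩ h
    simp only [mem_coe, mem_sigma, mem_powersetCard_univ] at h ⊢
    have hi := notMem_of_mem_violators h.2
    exact ⟨by rw [card_insert_of_notMem hi, h.1], (mem_extremes_insert hi).mpr h.2⟩
  · rintro ⟨S, i⟩ h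
    simp only [mem_coe, mem_sigma, mem_powersetCard_univ] at h ⊢
    have hi : i ∈ S := (mem_filter.mp h.2).1
    refine ⟨by rw [card_erase_of_mem hi, h.1, Nat.add_sub_cancel], ?_⟩
    rw [← mem_extremes_insert (notMem_erase i S), insert_erase hi]
    exact h.2
  · rintro ⟨R, i⟩ h
    simp only [mem_coe, mem_sigma] at h
    simp only [erase_insert (notMem_of_mem_violators h.2)]
  · rintro ⟨S, i⟩ h
    simp only [mem_coe, mem_sigma] at h
    simp only [insert_erase (mem_filter.mp h.2).1]

theorem sum_card_violators_mul_succ_le (hg : Monotone g) {d : ℕ} (hdim : CombDimLE g d) (r : ℕ) :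
    (∑ R ∈ powersetCard r univ, #(violators g R)) * (r + 1) ≤
      (Fintype.card ι).choose r * (Fintype.card ι - r) * d := by
  have hsum : ∑ S ∈ powersetCard (r + 1) univ, #(extremes g S) ≤
      (Fintype.card ι).choose (r + 1) * d := by
    simpa only [card_powersetCard, card_univ, smul_eq_mul] using
      sum_le_card_nsmul (powersetCard (r + 1) univ) _ d fun S _ ↦ card_extremes_le hg hdim S
  calc
    _ = (∑ S ∈ powersetCard (r + 1) univ, #(extremes g S)) * (r + 1) := by
      rw [sum_card_violators_eq_sum_card_extremes]
    _ ≤ (Fintype.card ι).choose (r + 1) * d * (r + 1) := by gcongr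
    _ = _ := by rw [mul_right_comm, Nat.choose_succ_right_eq]

theorem card_filter_lt_card_violators_mul_le (hg : Monotone g) {d : ℕ} (hdim : CombDimLE g d)
    (r : ℕ) (t : ℝ) :
    #{R ∈ powersetCard r univ | t < #(violators g R)} * t * (r + 1) ≤
      (Fintype.card ι).choose r * Fintype.card ι * d := by
  have markov : #{R ∈ powersetCard r univ | t < #(violators g R)} * t ≤
      ∑ R ∈ powersetCard r univ, (#(violators g R) : ℝ) := by
    rw [← nsmul_eq_mul]
    exact (card_nsmul_le_sum _ _ _ fun R hR ↦ (mem_filter.mp hR).2.le).trans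
      (sum_le_sum_of_subset_of_nonneg (filter_subset _ _) fun _ _ _ ↦ Nat.cast_nonneg _)
  have sampling : (∑ R ∈ powersetCard r univ, #(violators g R)) * (r + 1) ≤
      (Fintype.card ι).choose r * Fintype.card ι * d :=
    (sum_card_violators_mul_succ_le hg hdim r).trans (by gcongr; exact Nat.sub_le _ _)
  calc
    _ ≤ (∑ R ∈ powersetCard r univ, (#(violators g R) : ℝ)) * (r + 1) := by gcongr
    _ ≤ _ := mod_cast sampling

end LPType

open LPType in
theorem stmt_4_general {α ι T : Type*} [DecidableEq α] [Fintype ι] [Preorder T] [DecidableLT T]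
    {f : Finset α → T} (hf : Monotone f) {d : ℕ} (hd : 1 ≤ d) (hdim : CombDimLE f d)
    (π : ι → α) {r : ℕ} (hr : 6 * d ^ 2 ≤ r + 1) :
    (#{R ∈ powersetCard r (univ : Finset ι) | (Fintype.card ι : ℝ) / (3 * d) <
        #{i : ι | f (R.image π) < f (insert (π i) (R.image π))}} : ℝ) ≤
      (Fintype.card ι).choose r / 2 := by
  classical
  obtain _ | _ := isEmpty_or_nonempty ι
  · have : (0 : ℝ) ≤ (Fintype.card ι).choose r / 2 := by positivity
    simpa using this
  set m := Fintype.card ι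
  have hm : (0 : ℝ) < m := mod_cast Fintype.card_pos
  have hd₀ : (0 : ℝ) < d := mod_cast hd
  have hr' : (6 * d ^ 2 : ℝ) ≤ r + 1 := mod_cast hr
  have hbound := card_filter_lt_card_violators_mul_le
    (hf.comp fun _ _ ↦ image_subset_image) (hdim.comp_image π) r (m / (3 * d))
  simp only [violators, Function.comp_apply, image_insert] at hbound
  set bad := #{R ∈ powersetCard r (univ : Finset ι) | (m : ℝ) / (3 * d) <
    #{i : ι | f (R.image π) < f (insert (π i) (R.image π))}}
  refine le_of_mul_le_mul_right ?_ (mul_pos hm hd₀)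
  calc
    (bad : ℝ) * (m * d) = bad * (m / (3 * d)) * (6 * d ^ 2) / 2 := by
      field_simp
      ring
    _ ≤ bad * (m / (3 * d)) * (r + 1) / 2 := by gcongr
    _ ≤ m.choose r * m * d / 2 := by gcongr
    _ = m.choose r / 2 * (m * d) := by ring

/-- For `r = 6d²`, the number of `r`-element subsets `R` of the index set whose
violator set has size exceeding `m/(3d)` is at most half of all `r`-element
subsets; equivalently, a uniformly random `R` satisfies `|V_R| > m/(3d)` with
probability at most `1/2`. -/
theorem stmt_4 {α ι T : Type*} [DecidableEq α] [Fintype ι] [LinearOrder T]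
    (f : Finset α → T)
    (mono : ∀ F G : Finset α, F ⊆ G → f F ≤ f G)
    (locality : ∀ F G : Finset α, F ⊆ G → f F = f G →
      ∀ h : α, f G < f (insert h G) → f F < f (insert h F))
    (d : ℕ) (hd : 1 ≤ d)
    (dim : ∀ B : Finset α, (∀ B' : Finset α, B' ⊂ B → f B' < f B) → B.card ≤ d)
    (m : ℕ) (hm : Fintype.card ι = m)
    (π : ι → α) (r : ℕ) (hr : r = 6 * d ^ 2) (hrm : r < m) :
    (((Finset.powersetCard r (Finset.univ : Finset ι)).filter (fun R =>
        (m : ℝ) / (3 * d) <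
          ((Finset.univ.filter (fun i : ι =>
            f (R.image π) < f (insert (π i) (R.image π)))).card : ℝ))).card : ℝ)
      ≤ (Nat.choose m r : ℝ) / 2 := by
  subst hm
  exact stmt_4_general (fun F G ↦ mono F G) hd dim π (hr.ge.trans r.le_succ)
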